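/- Type preservation of the CBV translation of the graded-monadic λ-calculus: if Γ ⊢_mon e : τ, then ⟦Γ⟧v ⊢ ⟦e⟧v :^⊥ F ⟦τ⟧v in CBPV with effects. -/

import Mathlib

set_option autoImplicit false

/-- A preordered monoid of effects `(E, ·, ⊥, ≤eff)`, with a distinguished `tock` effect. -/
structure EffSig (E : Type) where
  op : E → E → E
  bot : E
  tock : E
  le : E → E → Prop
  op_assoc : ∀ a b c, op (op a b) c = op a (op b c)
  bot_op : ∀ a, op bot a = a
  op_bot : ∀ a, op a bot = a
  le_refl : ∀ a, le a a
  le_trans : ∀ a b c, le a b → le b c → le a c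
  le_op : ∀ a b c d, le a b → le c d → le (op a c) (op b d)

namespace CBPVEff

mutual
/-- CBPV value types: `unit`, graded thunks `U_φ B`, positive products, sums. -/
inductive VTy (E : Type) : Type where
  | unit : VTy E
  | thunk : E → CTy E → VTy E
  | prod : VTy E → VTy E → VTy E
  | sum : VTy E → VTy E → VTy E
/-- CBPV computation types: functions, returners `F A`, negative products. -/
inductive CTy (E : Type) : Type where
  | arr : VTy E → CTy E → CTy E
  | F : VTy E → CTy E
  | wth : CTy E → CTy E → CTy E
end

mutual
/-- CBPV values (de Bruijn indices for variables). -/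
inductive Val : Type where
  | var : Nat → Val
  | unit : Val
  | thunk : Comp → Val
  | pair : Val → Val → Val
  | inl : Val → Val
  | inr : Val → Val
/-- CBPV computations. -/
inductive Comp : Type where
  | lam : Comp → Comp
  | app : Comp → Val → Comp
  | force : Val → Comp
  | split : Val → Comp → Comp
  | cpair : Comp → Comp → Comp
  | fst : Comp → Comp
  | snd : Comp → Comp
  | ret : Val → Comp
  | letin : Comp → Comp → Comp
  | seq : Val → Comp → Comp
  | case : Val → Comp → Comp → Comp
  | tick : Comp
end

mutual
/-- The value typing judgment `Γ ⊢ V : A` of the CBPV type-and-effect system. -/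
inductive VHasTy {E : Type} (S : EffSig E) : List (VTy E) → Val → VTy E → Prop where
  | var : ∀ {Γ : List (VTy E)} {x : Nat} {A : VTy E},
      Γ[x]? = some A → VHasTy S Γ (.var x) A
  | unit : ∀ {Γ : List (VTy E)}, VHasTy S Γ .unit .unit
  | thunk : ∀ {Γ : List (VTy E)} {M : Comp} {φ : E} {B : CTy E},
      CHasTy S Γ M φ B → VHasTy S Γ (.thunk M) (.thunk φ B)
  | pair : ∀ {Γ : List (VTy E)} {V₁ V₂ : Val} {A₁ A₂ : VTy E},
      VHasTy S Γ V₁ A₁ → VHasTy S Γ V₂ A₂ → VHasTy S Γ (.pair V₁ V₂) (.prod A₁ A₂)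
  | inl : ∀ {Γ : List (VTy E)} {V : Val} {A₁ A₂ : VTy E},
      VHasTy S Γ V A₁ → VHasTy S Γ (.inl V) (.sum A₁ A₂)
  | inr : ∀ {Γ : List (VTy E)} {V : Val} {A₁ A₂ : VTy E},
      VHasTy S Γ V A₂ → VHasTy S Γ (.inr V) (.sum A₁ A₂)

/-- The computation typing judgment `Γ ⊢ M :^φ B` of the CBPV type-and-effect system. -/
inductive CHasTy {E : Type} (S : EffSig E) : List (VTy E) → Comp → E → CTy E → Prop where
  | tick : ∀ {Γ : List (VTy E)} {φ : E}, S.le S.tock φ → CHasTy S Γ .tick φ (.F .unit)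
  | lam : ∀ {Γ : List (VTy E)} {A : VTy E} {M : Comp} {φ : E} {B : CTy E},
      CHasTy S (A :: Γ) M φ B → CHasTy S Γ (.lam M) φ (.arr A B)
  | app : ∀ {Γ : List (VTy E)} {M : Comp} {V : Val} {A : VTy E} {φ : E} {B : CTy E},
      CHasTy S Γ M φ (.arr A B) → VHasTy S Γ V A → CHasTy S Γ (.app M V) φ B
  | force : ∀ {Γ : List (VTy E)} {V : Val} {φ' φ : E} {B : CTy E},
      VHasTy S Γ V (.thunk φ' B) → S.le φ' φ → CHasTy S Γ (.force V) φ B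
  | ret : ∀ {Γ : List (VTy E)} {V : Val} {A : VTy E} {φ : E},
      VHasTy S Γ V A → S.le S.bot φ → CHasTy S Γ (.ret V) φ (.F A)
  | letin : ∀ {Γ : List (VTy E)} {M N : Comp} {A : VTy E} {φ₁ φ₂ φ : E} {B : CTy E},
      CHasTy S Γ M φ₁ (.F A) → CHasTy S (A :: Γ) N φ₂ B →
      S.le (S.op φ₁ φ₂) φ → CHasTy S Γ (.letin M N) φ B
  | split : ∀ {Γ : List (VTy E)} {V : Val} {A₁ A₂ : VTy E} {N : Comp} {φ : E} {B : CTy E},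
      VHasTy S Γ V (.prod A₁ A₂) → CHasTy S (A₂ :: A₁ :: Γ) N φ B →
      CHasTy S Γ (.split V N) φ B
  | cpair : ∀ {Γ : List (VTy E)} {M₁ M₂ : Comp} {φ : E} {B₁ B₂ : CTy E},
      CHasTy S Γ M₁ φ B₁ → CHasTy S Γ M₂ φ B₂ → CHasTy S Γ (.cpair M₁ M₂) φ (.wth B₁ B₂)
  | fst : ∀ {Γ : List (VTy E)} {M : Comp} {φ : E} {B₁ B₂ : CTy E},
      CHasTy S Γ M φ (.wth B₁ B₂) → CHasTy S Γ (.fst M) φ B₁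
  | snd : ∀ {Γ : List (VTy E)} {M : Comp} {φ : E} {B₁ B₂ : CTy E},
      CHasTy S Γ M φ (.wth B₁ B₂) → CHasTy S Γ (.snd M) φ B₂
  | seq : ∀ {Γ : List (VTy E)} {V : Val} {M : Comp} {φ : E} {B : CTy E},
      VHasTy S Γ V .unit → CHasTy S Γ M φ B → CHasTy S Γ (.seq V M) φ B
  | case : ∀ {Γ : List (VTy E)} {V : Val} {A₁ A₂ : VTy E} {M₁ M₂ : Comp} {φ : E} {B : CTy E},
      VHasTy S Γ V (.sum A₁ A₂) → CHasTy S (A₁ :: Γ) M₁ φ B →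
      CHasTy S (A₂ :: Γ) M₂ φ B → CHasTy S Γ (.case V M₁ M₂) φ B
end

/-- Lifting a de Bruijn renaming under one binder. -/
def liftRen (f : Nat → Nat) : Nat → Nat
  | 0 => 0
  | n + 1 => f n + 1

mutual
/-- Renaming of values. -/
def Val.rename : Val → (Nat → Nat) → Val
  | .var x, f => .var (f x)
  | .unit, _ => .unit
  | .thunk M, f => .thunk (M.rename f)
  | .pair V₁ V₂, f => .pair (V₁.rename f) (V₂.rename f)
  | .inl V, f => .inl (V.rename f)
  | .inr V, f => .inr (V.rename f)
/-- Renaming of computations. -/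
def Comp.rename : Comp → (Nat → Nat) → Comp
  | .lam M, f => .lam (M.rename (liftRen f))
  | .app M V, f => .app (M.rename f) (V.rename f)
  | .force V, f => .force (V.rename f)
  | .split V N, f => .split (V.rename f) (N.rename (liftRen (liftRen f)))
  | .cpair M₁ M₂, f => .cpair (M₁.rename f) (M₂.rename f)
  | .fst M, f => .fst (M.rename f)
  | .snd M, f => .snd (M.rename f)
  | .ret V, f => .ret (V.rename f)
  | .letin M N, f => .letin (M.rename f) (N.rename (liftRen f))
  | .seq V M, f => .seq (V.rename f) (M.rename f)
  | .case V M₁ M₂, f => .case (V.rename f) (M₁.rename (liftRen f)) (M₂.rename (liftRen f))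
  | .tick, _ => .tick
end

/-- Weakening: shift all free variables up by one. -/
def shift (M : Comp) : Comp := M.rename Nat.succ

/-- Weakening under one binder: shift all free variables except index 0 up by one. -/
def shift1 (M : Comp) : Comp := M.rename (liftRen Nat.succ)

/-- Weakening under two binders. -/
def shift2 (M : Comp) : Comp := M.rename (liftRen (liftRen Nat.succ))

end CBPVEff

namespace LamMon

/-- Types of the simply-typed λ-calculus with a graded monad `T_φ`. -/
inductive MTy (E : Type) : Type where
  | unit : MTy E
  | arr : MTy E → MTy E → MTy E
  | wth : MTy E → MTy E → MTy E
  | sum : MTy E → MTy E → MTy E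
  | T : E → MTy E → MTy E

/-- Terms of the graded-monadic λ-calculus (de Bruijn indices). -/
inductive MTm : Type where
  | var : Nat → MTm
  | lam : MTm → MTm
  | app : MTm → MTm → MTm
  | unit : MTm
  | seq : MTm → MTm → MTm
  | wpair : MTm → MTm → MTm
  | fst : MTm → MTm
  | snd : MTm → MTm
  | inl : MTm → MTm
  | inr : MTm → MTm
  | case : MTm → MTm → MTm → MTm
  | ret : MTm → MTm
  | bind : MTm → MTm → MTm
  | tick : MTm

/-- The typing judgment `Γ ⊢_mon e : τ`: a pure λ-calculus whose effects are
isolated inside the graded monadic type `T_φ`. -/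
inductive HasTy {E : Type} (S : EffSig E) : List (MTy E) → MTm → MTy E → Prop where
  | var : ∀ {Γ : List (MTy E)} {x : Nat} {τ : MTy E},
      Γ[x]? = some τ → HasTy S Γ (.var x) τ
  | lam : ∀ {Γ : List (MTy E)} {e : MTm} {τ₁ τ₂ : MTy E},
      HasTy S (τ₁ :: Γ) e τ₂ → HasTy S Γ (.lam e) (.arr τ₁ τ₂)
  | app : ∀ {Γ : List (MTy E)} {e₁ e₂ : MTm} {τ₁ τ₂ : MTy E},
      HasTy S Γ e₁ (.arr τ₁ τ₂) → HasTy S Γ e₂ τ₁ → HasTy S Γ (.app e₁ e₂) τ₂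
  | unit : ∀ {Γ : List (MTy E)}, HasTy S Γ .unit .unit
  | seq : ∀ {Γ : List (MTy E)} {e₁ e₂ : MTm} {τ : MTy E},
      HasTy S Γ e₁ .unit → HasTy S Γ e₂ τ → HasTy S Γ (.seq e₁ e₂) τ
  | wpair : ∀ {Γ : List (MTy E)} {e₁ e₂ : MTm} {τ₁ τ₂ : MTy E},
      HasTy S Γ e₁ τ₁ → HasTy S Γ e₂ τ₂ → HasTy S Γ (.wpair e₁ e₂) (.wth τ₁ τ₂)
  | fst : ∀ {Γ : List (MTy E)} {e : MTm} {τ₁ τ₂ : MTy E},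
      HasTy S Γ e (.wth τ₁ τ₂) → HasTy S Γ (.fst e) τ₁
  | snd : ∀ {Γ : List (MTy E)} {e : MTm} {τ₁ τ₂ : MTy E},
      HasTy S Γ e (.wth τ₁ τ₂) → HasTy S Γ (.snd e) τ₂
  | inl : ∀ {Γ : List (MTy E)} {e : MTm} {τ₁ τ₂ : MTy E},
      HasTy S Γ e τ₁ → HasTy S Γ (.inl e) (.sum τ₁ τ₂)
  | inr : ∀ {Γ : List (MTy E)} {e : MTm} {τ₁ τ₂ : MTy E},
      HasTy S Γ e τ₂ → HasTy S Γ (.inr e) (.sum τ₁ τ₂)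
  | case : ∀ {Γ : List (MTy E)} {e e₁ e₂ : MTm} {τ₁ τ₂ τ : MTy E},
      HasTy S Γ e (.sum τ₁ τ₂) → HasTy S (τ₁ :: Γ) e₁ τ →
      HasTy S (τ₂ :: Γ) e₂ τ → HasTy S Γ (.case e e₁ e₂) τ
  | ret : ∀ {Γ : List (MTy E)} {e : MTm} {τ : MTy E} {φ : E},
      HasTy S Γ e τ → S.le S.bot φ → HasTy S Γ (.ret e) (.T φ τ)
  | bind : ∀ {Γ : List (MTy E)} {e₁ e₂ : MTm} {τ₁ τ₂ : MTy E} {φ₁ φ₂ φ : E},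
      HasTy S Γ e₁ (.T φ₁ τ₁) → HasTy S (τ₁ :: Γ) e₂ (.T φ₂ τ₂) →
      S.le (S.op φ₁ φ₂) φ → HasTy S Γ (.bind e₁ e₂) (.T φ τ₂)
  | tick : ∀ {Γ : List (MTy E)} {φ : E}, S.le S.tock φ → HasTy S Γ .tick (.T φ .unit)

end LamMon

open CBPVEff LamMon

/-- CBV translation of graded-monadic source types into CBPV value types;
the graded monad is translated as `⟦T_φ τ⟧v = U_φ (F ⟦τ⟧v)`. -/
def tyTransV {E : Type} (S : EffSig E) : MTy E → VTy E
  | .unit => .unit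
  | .arr τ₁ τ₂ => .thunk S.bot (.arr (tyTransV S τ₁) (.F (tyTransV S τ₂)))
  | .wth τ₁ τ₂ => .thunk S.bot (.wth (.F (tyTransV S τ₁)) (.F (tyTransV S τ₂)))
  | .sum τ₁ τ₂ => .sum (tyTransV S τ₁) (tyTransV S τ₂)
  | .T φ τ => .thunk φ (.F (tyTransV S τ))

/-- Levy's CBV translation of source terms into CBPV computations, extended
with the graded monadic operations. -/
def tmTransV : MTm → Comp
  | .var x => .ret (.var x)
  | .lam e => .ret (.thunk (.lam (tmTransV e)))
  | .app e₁ e₂ =>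
      .letin (tmTransV e₁) (.letin (shift (tmTransV e₂)) (.app (.force (.var 1)) (.var 0)))
  | .unit => .ret .unit
  | .seq e₁ e₂ => .letin (tmTransV e₁) (.seq (.var 0) (shift (tmTransV e₂)))
  | .wpair e₁ e₂ => .ret (.thunk (.cpair (tmTransV e₁) (tmTransV e₂)))
  | .fst e => .letin (tmTransV e) (.fst (.force (.var 0)))
  | .snd e => .letin (tmTransV e) (.snd (.force (.var 0)))
  | .inl e => .letin (tmTransV e) (.ret (.inl (.var 0)))
  | .inr e => .letin (tmTransV e) (.ret (.inr (.var 0)))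
  | .case e e₁ e₂ =>
      .letin (tmTransV e) (.case (.var 0) (shift1 (tmTransV e₁)) (shift1 (tmTransV e₂)))
  | .ret e => .ret (.thunk (tmTransV e))
  | .bind e₁ e₂ =>
      .letin (tmTransV e₁) (.ret (.thunk (.letin (.force (.var 0))
        (.letin (shift1 (tmTransV e₂)) (.force (.var 0))))))
  | .tick => .ret (.thunk (.letin .tick (.ret (.var 0))))

/-!
The proof is an induction on the source derivation. The translation inserts `let`s that move
subterms under extra binders, so CBPV typing has to be stable under renaming of variables. A `let`
on a translated subterm runs a computation of effect `⊥`, the identity of the monoid, so it adds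
nothing to the effect. A `return` at grade `φ` thunks a computation of effect `⊥` at the larger
effect `φ`, which is possible because raising the effect of a computation is an admissible rule.
-/

namespace EffSig

variable {E : Type} (S : EffSig E)

theorem bot_op_le (φ : E) : S.le (S.op S.bot φ) φ :=
  (S.bot_op φ).symm ▸ S.le_refl φ

theorem op_bot_le (φ : E) : S.le (S.op φ S.bot) φ :=
  (S.op_bot φ).symm ▸ S.le_refl φ

end EffSig

namespace CBPVEff

/-- `IsRenaming f Γ Δ`: the map `f` on de Bruijn indices is a renaming from the context `Γ` to the
context `Δ`, i.e. it sends every variable of `Γ` to a variable of `Δ` of the same type. Values of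
`f` outside `Γ` are unconstrained. -/
def IsRenaming {α : Type*} (f : ℕ → ℕ) (Γ Δ : List α) : Prop :=
  ∀ ⦃x : ℕ⦄ ⦃a : α⦄, Γ[x]? = some a → Δ[f x]? = some a

namespace IsRenaming

variable {α : Type*}

theorem succ (a : α) (Γ : List α) : IsRenaming Nat.succ Γ (a :: Γ) :=
  fun _ _ hx => hx

theorem lift {f : ℕ → ℕ} {Γ Δ : List α} (hf : IsRenaming f Γ Δ) (a : α) :
    IsRenaming (liftRen f) (a :: Γ) (a :: Δ)
  | 0, _, hx => hx
  | _ + 1, _, hx => hf hx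

end IsRenaming

variable {E : Type} {S : EffSig E}

mutual

theorem VHasTy.rename {Γ Δ : List (VTy E)} {V : Val} {A : VTy E} {f : ℕ → ℕ}
    (hf : IsRenaming f Γ Δ) : VHasTy S Γ V A → VHasTy S Δ (V.rename f) A
  | .var hx => .var (hf hx)
  | .unit => .unit
  | .thunk hM => .thunk (hM.rename hf)
  | .pair hV₁ hV₂ => .pair (hV₁.rename hf) (hV₂.rename hf)
  | .inl hV => .inl (hV.rename hf)
  | .inr hV => .inr (hV.rename hf)

theorem CHasTy.rename {Γ Δ : List (VTy E)} {M : Comp} {φ : E} {B : CTy E} {f : ℕ → ℕ}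
    (hf : IsRenaming f Γ Δ) : CHasTy S Γ M φ B → CHasTy S Δ (M.rename f) φ B
  | .tick hφ => .tick hφ
  | .lam hM => .lam (hM.rename (hf.lift _))
  | .app hM hV => .app (hM.rename hf) (hV.rename hf)
  | .force hV hφ => .force (hV.rename hf) hφ
  | .ret hV hφ => .ret (hV.rename hf) hφ
  | .letin hM hN hφ => .letin (hM.rename hf) (hN.rename (hf.lift _)) hφ
  | .split hV hN => .split (hV.rename hf) (hN.rename ((hf.lift _).lift _))
  | .cpair hM₁ hM₂ => .cpair (hM₁.rename hf) (hM₂.rename hf)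
  | .fst hM => .fst (hM.rename hf)
  | .snd hM => .snd (hM.rename hf)
  | .seq hV hM => .seq (hV.rename hf) (hM.rename hf)
  | .case hV hM₁ hM₂ => .case (hV.rename hf) (hM₁.rename (hf.lift _)) (hM₂.rename (hf.lift _))

end

namespace CHasTy

variable {Γ : List (VTy E)} {M N : Comp} {V : Val} {A : VTy E} {B : CTy E} {φ φ₁ φ₂ ψ : E}

theorem shift (A : VTy E) (hM : CHasTy S Γ M φ B) : CHasTy S (A :: Γ) (shift M) φ B :=
  hM.rename (.succ A Γ)

theorem shift1 (A' : VTy E) (hM : CHasTy S (A :: Γ) M φ B) :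
    CHasTy S (A :: A' :: Γ) (shift1 M) φ B :=
  hM.rename ((IsRenaming.succ A' Γ).lift A)

theorem mono {Γ : List (VTy E)} {M : Comp} {B : CTy E} (hle : S.le φ ψ) :
    CHasTy S Γ M φ B → CHasTy S Γ M ψ B
  | .tick hφ => .tick (S.le_trans _ _ _ hφ hle)
  | .lam hM => .lam (hM.mono hle)
  | .app hM hV => .app (hM.mono hle) hV
  | .force hV hφ => .force hV (S.le_trans _ _ _ hφ hle)
  | .ret hV hφ => .ret hV (S.le_trans _ _ _ hφ hle)
  | .letin hM hN hφ => .letin hM hN (S.le_trans _ _ _ hφ hle)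
  | .split hV hN => .split hV (hN.mono hle)
  | .cpair hM₁ hM₂ => .cpair (hM₁.mono hle) (hM₂.mono hle)
  | .fst hM => .fst (hM.mono hle)
  | .snd hM => .snd (hM.mono hle)
  | .seq hV hM => .seq hV (hM.mono hle)
  | .case hV hM₁ hM₂ => .case hV (hM₁.mono hle) (hM₂.mono hle)

theorem ret_bot (hV : VHasTy S Γ V A) : CHasTy S Γ (.ret V) S.bot (.F A) :=
  .ret hV (S.le_refl S.bot)

theorem force_self (hV : VHasTy S Γ V (.thunk φ B)) : CHasTy S Γ (.force V) φ B :=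
  .force hV (S.le_refl φ)

theorem letin_of_bot_left (hM : CHasTy S Γ M S.bot (.F A)) (hN : CHasTy S (A :: Γ) N φ B) :
    CHasTy S Γ (.letin M N) φ B :=
  .letin hM hN (S.bot_op_le φ)

theorem letin_of_bot_right (hM : CHasTy S Γ M φ (.F A)) (hN : CHasTy S (A :: Γ) N S.bot B) :
    CHasTy S Γ (.letin M N) φ B :=
  .letin hM hN (S.op_bot_le φ)

theorem cbv_app (hM : CHasTy S Γ M S.bot (.F (.thunk φ (.arr A B))))
    (hN : CHasTy S Γ N S.bot (.F A)) :
    CHasTy S Γ (.letin M (.letin (CBPVEff.shift N) (.app (.force (.var 1)) (.var 0)))) φ B :=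
  letin_of_bot_left hM <| letin_of_bot_left (hN.shift _) <|
    .app (force_self (.var rfl)) (.var rfl)

theorem cbv_bind (hM : CHasTy S Γ M S.bot (.F (.thunk φ₁ (.F A))))
    (hN : CHasTy S (A :: Γ) N S.bot (.F (.thunk φ₂ B))) (hφ : S.le (S.op φ₁ φ₂) φ) :
    CHasTy S Γ (.letin M (.ret (.thunk (.letin (.force (.var 0))
      (.letin (CBPVEff.shift1 N) (.force (.var 0))))))) S.bot (.F (.thunk φ B)) := by
  have run_second : CHasTy S (A :: .thunk φ₁ (.F A) :: Γ)
      (.letin (CBPVEff.shift1 N) (.force (.var 0))) φ₂ B :=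
    letin_of_bot_left (hN.shift1 _) (force_self (.var rfl))
  exact letin_of_bot_left hM <| ret_bot <| .thunk <|
    .letin (force_self (.var rfl)) run_second hφ

end CHasTy

end CBPVEff

/-- Type preservation of the CBV translation of the graded-monadic λ-calculus:
if `Γ ⊢_mon e : τ` then `⟦Γ⟧v ⊢ ⟦e⟧v :^⊥ F ⟦τ⟧v` in CBPV with effects. -/
theorem cbv_monadic_translation_preservation {E : Type} (S : EffSig E)
    {Γ : List (MTy E)} {e : MTm} {τ : MTy E} (h : LamMon.HasTy S Γ e τ) :
    CHasTy S (Γ.map (tyTransV S)) (tmTransV e) S.bot (.F (tyTransV S τ)) := by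
  induction h with
  | var hx => exact .ret_bot (.var (by rw [List.getElem?_map, hx, Option.map_some]))
  | lam _ ih => exact .ret_bot (.thunk (.lam ih))
  | app _ _ ih₁ ih₂ => exact .cbv_app ih₁ ih₂
  | unit => exact .ret_bot .unit
  | seq _ _ ih₁ ih₂ => exact .letin_of_bot_left ih₁ (.seq (.var rfl) (ih₂.shift _))
  | wpair _ _ ih₁ ih₂ => exact .ret_bot (.thunk (.cpair ih₁ ih₂))
  | fst _ ih => exact .letin_of_bot_left ih (.fst (.force_self (.var rfl)))
  | snd _ ih => exact .letin_of_bot_left ih (.snd (.force_self (.var rfl)))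
  | inl _ ih => exact .letin_of_bot_left ih (.ret_bot (.inl (.var rfl)))
  | inr _ ih => exact .letin_of_bot_left ih (.ret_bot (.inr (.var rfl)))
  | case _ _ _ ih ih₁ ih₂ =>
    exact .letin_of_bot_left ih (.case (.var rfl) (ih₁.shift1 _) (ih₂.shift1 _))
  | ret _ hφ ih => exact .ret_bot (.thunk (ih.mono hφ))
  | bind _ _ hφ ih₁ ih₂ => exact .cbv_bind ih₁ ih₂ hφ
  | tick hφ => exact .ret_bot (.thunk (.letin_of_bot_right (.tick hφ) (.ret_bot (.var rfl))))
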